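/- arXiv:2501.00951 — 5 statements merged into one kernel-verified Lean document; each statement's English description precedes it below -/
import Mathlib

section
/- Let d, t be positive integers, let μ be the normalized Haar probability measure on U(d), and let e₀ ∈ ℂ^d be a fixed unit vector (e.g. the first standard basis vector). Then ∫_{U(d)} ((U e₀)(U e₀)ᴴ)^{⊗t} dμ(U) = ((d−1)!/(d+t−1)!) · Σ_{π ∈ S_t} P_π, where the sum runs over all permutations π of {1,…,t} and P_π is the permutation operator on (ℂ^d)^{⊗t}. (t-th moment of a Haar random pure state equals the normalized projector onto the symmetric subspace, written as a sum of permutation operators.) -/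
open MeasureTheory Matrix
open scoped Kronecker ComplexOrder

attribute [local instance] Matrix.normedAddCommGroup Matrix.normedSpace

/-- The `t`-fold Kronecker (tensor) power of a square matrix, indexed by `Fin t → ι`. -/
noncomputable def tpow {ι : Type*} (M : Matrix ι ι ℂ) (t : ℕ) :
    Matrix (Fin t → ι) (Fin t → ι) ℂ :=
  fun f g => ∏ i, M (f i) (g i)

/-- The permutation operator `P_π` on `(ℂ^d)^{⊗t}`:
`P_π(f,g) = 1` if `f = g ∘ π` and `0` otherwise. -/
noncomputable def permOp (d t : ℕ) (π : Equiv.Perm (Fin t)) :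
    Matrix (Fin t → Fin d) (Fin t → Fin d) ℂ :=
  fun f g => if f = g ∘ π then 1 else 0

noncomputable instance {n : Type*} [Fintype n] [DecidableEq n] :
    MeasurableSpace (Matrix.unitaryGroup n ℂ) := borel _

instance {n : Type*} [Fintype n] [DecidableEq n] :
    BorelSpace (Matrix.unitaryGroup n ℂ) := ⟨rfl⟩

open scoped ComplexConjugate

lemma hsm_compact (d : ℕ) : CompactSpace (Matrix.unitaryGroup (Fin d) ℂ) := by
  refine (isCompact_iff_compactSpace (s := ((Matrix.unitaryGroup (Fin d) ℂ :
    Submonoid (Matrix (Fin d) (Fin d) ℂ)) : Set (Matrix (Fin d) (Fin d) ℂ)))).1 ?_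
  have hK : IsCompact (Set.pi Set.univ (fun _ : Fin d => Set.pi Set.univ
      (fun _ : Fin d => Metric.closedBall (0 : ℂ) 1))) :=
    isCompact_univ_pi fun _ => isCompact_univ_pi fun _ => isCompact_closedBall _ _
  refine IsCompact.of_isClosed_subset hK ?_ ?_
  · have : ((Matrix.unitaryGroup (Fin d) ℂ : Submonoid (Matrix (Fin d) (Fin d) ℂ)) :
        Set (Matrix (Fin d) (Fin d) ℂ)) = {A | A * star A = 1} := by
      ext A
      exact Matrix.mem_unitaryGroup_iff
    rw [this]
    exact isClosed_eq (continuous_id.matrix_mul continuous_id.matrix_conjTranspose)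
      continuous_const
  · intro A hA i _ j _
    simpa using entry_norm_bound_of_unitary hA i j

lemma hsm_integrable {G : Type*} [TopologicalSpace G] [CompactSpace G] [MeasurableSpace G]
    [BorelSpace G] (μ : Measure G) [IsFiniteMeasure μ] {f : G → ℂ} (hf : Continuous f) :
    Integrable f μ :=
  hf.integrable_of_hasCompactSupport (HasCompactSupport.of_compactSpace f)

lemma hsm_deriv {G : Type*} [TopologicalSpace G] [CompactSpace G] [MeasurableSpace G]
    [BorelSpace G] (μ : Measure G) [IsFiniteMeasure μ] (F F' : ℝ → G → ℂ)
    (hF : ∀ θ, Continuous (F θ)) (hF' : Continuous (fun p : ℝ × G => F' p.1 p.2))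
    (hd : ∀ θ U, HasDerivAt (fun x => F x U) (F' θ U) θ)
    (hc : ∀ θ, ∫ U, F θ U ∂μ = ∫ U, F 0 U ∂μ) : ∫ U, F' 0 U ∂μ = 0 := by
  obtain ⟨C, hC⟩ := ((isCompact_closedBall (0 : ℝ) 1).prod
    (isCompact_univ (X := G))).exists_bound_of_continuousOn hF'.continuousOn
  have h := (hasDerivAt_integral_of_dominated_loc_of_deriv_le (μ := μ) (F := F) (F' := F')
    (x₀ := (0 : ℝ)) (bound := fun _ => C) (s := Metric.closedBall 0 1)
    (Metric.closedBall_mem_nhds _ one_pos)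
    (Filter.Eventually.of_forall fun θ => (hsm_integrable μ (hF θ)).aestronglyMeasurable)
    (hsm_integrable μ (hF 0))
    (hsm_integrable μ (hF'.comp (Continuous.prodMk_right 0))).aestronglyMeasurable
    (Filter.Eventually.of_forall fun U θ hθ => hC (θ, U) ⟨hθ, trivial⟩)
    (integrable_const _)
    (Filter.Eventually.of_forall fun U θ _ => hd θ U)).2
  have h2 : (fun θ => ∫ U, F θ U ∂μ) = fun _ => ∫ U, F 0 U ∂μ := funext hc
  rw [h2] at h
  exact h.unique (hasDerivAt_const _ _)

lemma hsm_polar {d : ℕ} (T : Fin d → Fin d → ℂ)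
    (h : ∀ w : Fin d → ℂ, ∑ l, ∑ m, w l * star (w m) * T l m = 0) (l m : Fin d) : T l m = 0 := by
  set B : (Fin d → ℂ) → (Fin d → ℂ) → ℂ := fun w v => ∑ l, ∑ m, w l * star (v m) * T l m with hB
  have hs : ∀ a b, B (Pi.single a 1) (Pi.single b 1) = T a b := by
    intro a b
    simp only [hB]
    rw [Finset.sum_eq_single a, Finset.sum_eq_single b]
    · simp
    · intro c _ hc; simp [hc]
    · simp
    · intro c _ hc; simp [hc]
    · simp
  have hx : ∀ (c : ℂ) x y, B (x + c • y) (x + c • y) = B x x + star c * B x y + c * B y x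
      + c * star c * B y y := by
    intro c x y
    simp only [hB, Finset.mul_sum, ← Finset.sum_add_distrib]
    refine Finset.sum_congr rfl fun l _ => Finset.sum_congr rfl fun m _ => ?_
    simp
    ring
  have h0 : ∀ w, B w w = 0 := h
  have h1 := hx 1 (Pi.single l 1) (Pi.single m 1)
  have h2 := hx Complex.I (Pi.single l 1) (Pi.single m 1)
  rw [h0, h0, h0, hs, hs] at h1 h2
  simp at h1 h2
  have h3 : T m l = T l m := by
    have : Complex.I * (T m l - T l m) = 0 := by linear_combination -h2
    rcases mul_eq_zero.1 this with h | h
    · exact absurd h Complex.I_ne_zero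
    · exact sub_eq_zero.1 h
  rw [h3] at h1
  linear_combination -h1 / 2

lemma hsm_count {d t : ℕ} (f g : Fin (t + 1) → Fin d) :
    (∑ π : Equiv.Perm (Fin (t + 1)), (if f = g ∘ π then (1 : ℂ) else 0)) =
    ∑ p, if g p = f 0 then ∑ π : Equiv.Perm (Fin t),
      (if f ∘ Fin.succ = (fun j => g (Equiv.swap 0 p (Fin.succ j))) ∘ π then (1 : ℂ) else 0)
      else 0 := by
  rw [← Equiv.Perm.decomposeFin.symm.sum_comp, Fintype.sum_prod_type]
  refine Finset.sum_congr rfl fun p _ => ?_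
  have key : ∀ π : Equiv.Perm (Fin t), f = g ∘ (Equiv.Perm.decomposeFin.symm (p, π)) ↔
      g p = f 0 ∧ f ∘ Fin.succ = (fun j => g (Equiv.swap 0 p (Fin.succ j))) ∘ π := by
    intro π
    rw [funext_iff, Fin.forall_fin_succ, funext_iff]
    simp [Equiv.Perm.decomposeFin_symm_apply_succ, eq_comm]
  simp_rw [key]
  split_ifs with h <;> simp [h]

lemma hsm_prod_erase {t : ℕ} (a : Fin (t + 1) → ℂ) (p : Fin (t + 1)) :
    ∏ j ∈ Finset.univ.erase p, a j = ∏ j : Fin t, a (Equiv.swap 0 p (Fin.succ j)) := by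
  symm
  refine Finset.prod_bij (fun j _ => Equiv.swap 0 p (Fin.succ j)) ?_ ?_ ?_ ?_
  · intro j _
    simp only [Finset.mem_erase, Finset.mem_univ, and_true]
    intro h
    have := (Equiv.swap 0 p).injective (h.trans (Equiv.swap_apply_left 0 p).symm)
    exact Fin.succ_ne_zero _ this
  · intro i _ j _ h
    exact Fin.succ_injective _ ((Equiv.swap 0 p).injective h)
  · intro b hb
    have hb' : Equiv.swap 0 p b ≠ 0 := by
      intro h
      have : b = p := by
        exact (Equiv.swap 0 p).injective (h.trans (Equiv.swap_apply_right 0 p).symm)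
      simp [this] at hb
    obtain ⟨j, hj⟩ := Fin.exists_succ_eq.2 hb'
    exact ⟨j, Finset.mem_univ _, by simp [hj]⟩
  · intros; rfl

/-- The state vector. -/
noncomputable def hsmPsi {d : ℕ} (e : Fin d → ℂ) (U : Matrix.unitaryGroup (Fin d) ℂ) :
    Fin d → ℂ := (U : Matrix (Fin d) (Fin d) ℂ) *ᵥ e

lemma hsmPsi_cont {d : ℕ} (e : Fin d → ℂ) (i : Fin d) : Continuous (fun U => hsmPsi e U i) := by
  have : Continuous (fun U => hsmPsi e U) :=
    continuous_subtype_val.matrix_mulVec continuous_const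
  exact (continuous_apply i).comp this

lemma hsmPsi_norm {d : ℕ} (e : Fin d → ℂ) (he : ∑ i, e i * star (e i) = 1)
    (U : Matrix.unitaryGroup (Fin d) ℂ) : ∑ i, hsmPsi e U i * star (hsmPsi e U i) = 1 := by
  change hsmPsi e U ⬝ᵥ star (hsmPsi e U) = 1
  have h : star (U : Matrix (Fin d) (Fin d) ℂ) * U = 1 := Matrix.mem_unitaryGroup_iff'.1 U.2
  rw [Matrix.star_eq_conjTranspose] at h
  rw [dotProduct_comm]
  unfold hsmPsi
  rw [Matrix.star_mulVec, ← Matrix.dotProduct_mulVec, Matrix.mulVec_mulVec, h,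
    Matrix.one_mulVec, dotProduct_comm]
  exact he

/-- The one-parameter unitary group. -/
lemma hsm_unitary {d : ℕ} (w : Fin d → ℂ) (r : ℝ) (hr : r * ∑ i, w i * star (w i) = 1) (θ : ℝ) :
    (1 + ((Complex.exp (θ * Complex.I) - 1) * r) • Matrix.vecMulVec w (star w)) ∈
      Matrix.unitaryGroup (Fin d) ℂ := by
  rw [Matrix.mem_unitaryGroup_iff]
  set z := Complex.exp (θ * Complex.I) with hz
  have hzz : z * star z = 1 := by
    rw [hz, Complex.star_def, ← Complex.exp_conj, ← Complex.exp_add]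
    simp
  have hww : star w ⬝ᵥ w * r = 1 := by
    rw [← hr, mul_comm, dotProduct_comm]; rfl
  have hP : Matrix.vecMulVec w (star w) * Matrix.vecMulVec w (star w)
      = (star w ⬝ᵥ w) • Matrix.vecMulVec w (star w) := by
    rw [Matrix.vecMulVec_mul_vecMulVec]
    ext i j
    simp [Matrix.vecMulVec_apply]
    ring
  have hPs : star (Matrix.vecMulVec w (star w)) = Matrix.vecMulVec w (star w) := by
    ext i j
    simp [Matrix.vecMulVec_apply, Matrix.star_apply, mul_comm]
  rw [star_add, star_one, star_smul, hPs, mul_add, add_mul, add_mul, mul_one, one_mul,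
    smul_mul_smul_comm, hP, smul_smul, mul_one, add_assoc, ← add_smul, ← add_smul]
  convert add_zero _
  convert zero_smul ℂ _
  simp only [star_mul', star_sub, star_one]
  have : star (r : ℂ) = r := Complex.conj_ofReal r
  rw [this]
  linear_combination (r : ℂ) * ((z - 1) * (star z - 1)) * hww + (r : ℂ) * hzz

/-- The infinitesimal variation integrand. -/
noncomputable def hsmT {d n k : ℕ} (f : Fin n → Fin d) (g : Fin k → Fin d) (x : Fin d → ℂ)
    (l m : Fin d) : ℂ :=
  (∑ i, if f i = l then (∏ j ∈ Finset.univ.erase i, x (f j)) * x m else 0)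
      * (∏ j, star (x (g j)))
    - (∏ j, x (f j)) *
      (∑ i, if g i = m then (∏ j ∈ Finset.univ.erase i, star (x (g j))) * star (x l) else 0)

lemma hsm_sumaux {d n : ℕ} (f : Fin n → Fin d) (a : Fin n → ℂ) (w v x : Fin d → ℂ) :
    ∑ l, ∑ m, w l * v m * (∑ i, if f i = l then a i * x m else 0) =
      ∑ i, a i * (w (f i) * ∑ m, v m * x m) := by
  have h1 : ∀ l m, w l * v m * (∑ i, if f i = l then a i * x m else 0) =
      ∑ i, if f i = l then a i * (w l * (v m * x m)) else 0 := by
    intro l m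
    rw [Finset.mul_sum]
    refine Finset.sum_congr rfl fun i _ => ?_
    split_ifs
    · ring
    · ring
  simp only [h1]
  have h2 : ∀ l, ∑ m, ∑ i, (if f i = l then a i * (w l * (v m * x m)) else 0) =
      ∑ i, if f i = l then a i * (w l * ∑ m, v m * x m) else 0 := by
    intro l
    rw [Finset.sum_comm]
    refine Finset.sum_congr rfl fun i _ => ?_
    split_ifs
    · simp only [Finset.mul_sum]
    · simp
  simp only [h2]
  rw [Finset.sum_comm]
  simp

lemma hsmT_sum {d n k : ℕ} (f : Fin n → Fin d) (g : Fin k → Fin d) (x w : Fin d → ℂ) :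
    ∑ l, ∑ m, w l * star (w m) * hsmT f g x l m =
      (∑ i, (∏ j ∈ Finset.univ.erase i, x (f j)) * (w (f i) * ∑ m, star (w m) * x m))
        * (∏ j, star (x (g j)))
      - (∏ j, x (f j)) * (∑ i, (∏ j ∈ Finset.univ.erase i, star (x (g j))) *
          (star (w (g i)) * star (∑ m, star (w m) * x m))) := by
  unfold hsmT
  simp only [mul_sub, Finset.sum_sub_distrib]
  congr 1
  · rw [← hsm_sumaux]
    simp only [Finset.sum_mul, mul_assoc]
  · rw [star_sum, Finset.sum_comm]
    simp only [star_mul', star_star]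
    have h := hsm_sumaux g (fun i => ∏ j ∈ Finset.univ.erase i, star (x (g j)))
      (fun m => star (w m)) w (fun l => star (x l))
    rw [← h, Finset.mul_sum]
    refine Finset.sum_congr rfl fun m _ => ?_
    rw [Finset.mul_sum]
    refine Finset.sum_congr rfl fun l _ => ?_
    ring

lemma hsmT_cont {d n k : ℕ} (f : Fin n → Fin d) (g : Fin k → Fin d) (e : Fin d → ℂ)
    (l m : Fin d) : Continuous (fun U => hsmT f g (hsmPsi e U) l m) := by
  have := hsmPsi_cont e
  have h2 : ∀ i, Continuous (fun U => star (hsmPsi e U i)) := fun i => (this i).star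
  unfold hsmT
  refine ((continuous_finsetSum _ fun i _ => ?_).mul (continuous_finsetProd _ fun i _ => h2 _)).sub
    ((continuous_finsetProd _ fun i _ => this _).mul (continuous_finsetSum _ fun i _ => ?_))
  · split_ifs
    · exact (continuous_finsetProd _ fun i _ => this _).mul (this _)
    · exact continuous_const
  · split_ifs
    · exact (continuous_finsetProd _ fun i _ => h2 _).mul (h2 _)
    · exact continuous_const

lemma hsm_var {d n k : ℕ} (f : Fin n → Fin d) (g : Fin k → Fin d) (e : Fin d → ℂ)
    (μ : Measure (Matrix.unitaryGroup (Fin d) ℂ)) [μ.IsHaarMeasure] [IsProbabilityMeasure μ]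
    (l m : Fin d) : ∫ U, hsmT f g (hsmPsi e U) l m ∂μ = 0 := by
  have := hsm_compact d
  revert l m
  refine fun l m => hsm_polar (fun l m => ∫ U, hsmT f g (hsmPsi e U) l m ∂μ) ?_ l m
  intro w
  by_cases hw : w = 0
  · simp [hw]
  set r : ℝ := (∑ i, ‖w i‖ ^ 2)⁻¹ with hrdef
  have hpos : 0 < ∑ i, ‖w i‖ ^ 2 := by
    obtain ⟨i, hi⟩ := Function.ne_iff.1 hw
    exact Finset.sum_pos' (fun i _ => by positivity) ⟨i, Finset.mem_univ _, by
      have : 0 < ‖w i‖ := norm_pos_iff.2 hi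
      positivity⟩
  have hr0 : (r : ℂ) ≠ 0 := by
    rw [hrdef]; exact_mod_cast (inv_pos.2 hpos).ne'
  have hr : (r : ℂ) * ∑ i, w i * star (w i) = 1 := by
    have : ∑ i, w i * star (w i) = ((∑ i, ‖w i‖ ^ 2 : ℝ) : ℂ) := by
      push_cast
      exact Finset.sum_congr rfl fun i _ => Complex.mul_conj' (w i)
    rw [this, hrdef, ← Complex.ofReal_mul, inv_mul_cancel₀ hpos.ne', Complex.ofReal_one]
  have hpsi := hsmPsi_cont e
  set S : Matrix.unitaryGroup (Fin d) ℂ → ℂ := fun U => ∑ m, star (w m) * hsmPsi e U m with hS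
  have hSc : Continuous S := continuous_finsetSum _ fun m _ => continuous_const.mul (hpsi m)
  set A : ℝ → Matrix.unitaryGroup (Fin d) ℂ → Fin d → ℂ := fun θ U a =>
    hsmPsi e U a + (Complex.exp (θ * Complex.I) - 1) * (r * (w a * S U)) with hA
  set B : ℝ → Matrix.unitaryGroup (Fin d) ℂ → Fin d → ℂ := fun θ U a =>
    star (hsmPsi e U a) + (Complex.exp (-(θ * Complex.I)) - 1) * (r * (star (w a) * star (S U)))
    with hB
  have hAB : ∀ θ U a, star (A θ U a) = B θ U a := by
    intro θ U a
    simp only [hA, hB]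
    have h1 : star (r : ℂ) = r := Complex.conj_ofReal r
    have h2 : star (Complex.exp (θ * Complex.I)) = Complex.exp (-(θ * Complex.I)) := by
      rw [Complex.star_def, ← Complex.exp_conj]; simp
    simp only [star_add, star_mul', star_sub, star_one, h1, h2]
  have hAc : ∀ a, Continuous (fun p : ℝ × Matrix.unitaryGroup (Fin d) ℂ => A p.1 p.2 a) := by
    intro a
    have h1 : Continuous (fun p : ℝ × Matrix.unitaryGroup (Fin d) ℂ => hsmPsi e p.2 a) :=
      (hpsi a).comp continuous_snd
    have h2 : Continuous (fun p : ℝ × Matrix.unitaryGroup (Fin d) ℂ => S p.2) :=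
      hSc.comp continuous_snd
    simp only [hA]
    fun_prop
  have hBc : ∀ a, Continuous (fun p : ℝ × Matrix.unitaryGroup (Fin d) ℂ => B p.1 p.2 a) := by
    intro a
    simp only [← hAB]
    exact (hAc a).star
  have hSc' : Continuous (fun p : ℝ × Matrix.unitaryGroup (Fin d) ℂ => S p.2) :=
    hSc.comp continuous_snd
  have hSc'' : Continuous (fun p : ℝ × Matrix.unitaryGroup (Fin d) ℂ => star (S p.2)) :=
    hSc'.star
  have hAV : ∀ (θ : ℝ) U a, hsmPsi e (⟨_, hsm_unitary w r hr θ⟩ * U) a = A θ U a := by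
    intro θ U a
    have : hsmPsi e (⟨_, hsm_unitary w r hr θ⟩ * U) =
      (1 + ((Complex.exp (θ * Complex.I) - 1) * r) • Matrix.vecMulVec w (star w)) *ᵥ
        (hsmPsi e U) := by
      unfold hsmPsi
      rw [Matrix.mulVec_mulVec]
      rfl
    rw [this, Matrix.add_mulVec, Matrix.one_mulVec, Matrix.smul_mulVec, Matrix.vecMulVec_mulVec]
    simp only [hA, hS, Pi.add_apply, Pi.smul_apply, smul_eq_mul, dotProduct, Pi.star_apply,
      MulOpposite.smul_eq_mul_unop, MulOpposite.unop_op]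
    ring
  have hAd : ∀ (θ : ℝ) U a, HasDerivAt (fun x => A x U a)
      (Complex.exp (θ * Complex.I) * Complex.I * (r * (w a * S U))) θ := by
    intro θ U a
    have h1 : HasDerivAt (fun x : ℝ => (x : ℂ) * Complex.I) Complex.I θ := by
      simpa using (Complex.ofRealCLM.hasDerivAt (x := θ)).mul_const Complex.I
    exact ((h1.cexp.sub_const 1).mul_const _).const_add _
  have hBd : ∀ (θ : ℝ) U a, HasDerivAt (fun x => B x U a)
      (Complex.exp (-(θ * Complex.I)) * -Complex.I * (r * (star (w a) * star (S U)))) θ := by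
    intro θ U a
    have h1 : HasDerivAt (fun x : ℝ => (x : ℂ) * Complex.I) Complex.I θ := by
      simpa using (Complex.ofRealCLM.hasDerivAt (x := θ)).mul_const Complex.I
    exact ((h1.fun_neg.cexp.sub_const 1).mul_const _).const_add _
  have main := hsm_deriv μ
    (fun θ U => (∏ i, A θ U (f i)) * ∏ i, B θ U (g i))
    (fun θ U => (∑ i, (∏ j ∈ Finset.univ.erase i, A θ U (f j)) •
        (Complex.exp (θ * Complex.I) * Complex.I * (r * (w (f i) * S U)))) * ∏ i, B θ U (g i)
      + (∏ i, A θ U (f i)) * (∑ i, (∏ j ∈ Finset.univ.erase i, B θ U (g j)) •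
        (Complex.exp (-(θ * Complex.I)) * -Complex.I * (r * (star (w (g i)) * star (S U))))))
    ?_ ?_ ?_ ?_
  · have hA0 : ∀ U a, A 0 U a = hsmPsi e U a := by intro U a; simp [hA]
    have hB0 : ∀ U a, B 0 U a = star (hsmPsi e U a) := by intro U a; simp [hB]
    have hint : ∑ l, ∑ m, w l * star (w m) * ∫ U, hsmT f g (hsmPsi e U) l m ∂μ
        = ∫ U, ∑ l, ∑ m, w l * star (w m) * hsmT f g (hsmPsi e U) l m ∂μ := by
      have hi : ∀ l m, Integrable (fun U => w l * star (w m) * hsmT f g (hsmPsi e U) l m) μ :=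
        fun l m => hsm_integrable μ (continuous_const.mul (hsmT_cont f g e l m))
      rw [integral_finsetSum _ fun l _ => integrable_finsetSum _ fun m _ => hi l m]
      refine Finset.sum_congr rfl fun l _ => ?_
      rw [integral_finsetSum _ fun m _ => hi l m]
      refine Finset.sum_congr rfl fun m _ => ?_
      rw [integral_const_mul]
    rw [hint]
    have hmain : (Complex.I * r) *
        ∫ U, ∑ l, ∑ m, w l * star (w m) * hsmT f g (hsmPsi e U) l m ∂μ = 0 := by
      rw [← integral_const_mul, ← main]
      refine integral_congr_ae (Filter.Eventually.of_forall fun U => ?_)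
      simp only [hA0, hB0, hsmT_sum]
      simp only [Complex.ofReal_zero, zero_mul, neg_zero, Complex.exp_zero, one_mul, smul_eq_mul]
      rw [mul_sub, sub_eq_add_neg, ← mul_assoc, Finset.mul_sum, mul_left_comm, Finset.mul_sum,
        ← mul_neg, ← Finset.sum_neg_distrib]
      refine congrArg₂ _ (congrArg₂ _ (Finset.sum_congr rfl fun i _ => ?_) rfl)
        (congrArg₂ _ rfl (Finset.sum_congr rfl fun i _ => ?_))
      · simp only [hS]; ring
      · simp only [hS]; ring
    exact (mul_eq_zero.1 hmain).resolve_left (mul_ne_zero Complex.I_ne_zero hr0)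
  · intro θ
    exact (continuous_finsetProd _ fun i _ => (hAc _).comp (Continuous.prodMk_right θ)).mul
      (continuous_finsetProd _ fun i _ => (hBc _).comp (Continuous.prodMk_right θ))
  · refine ((continuous_finsetSum _ fun i _ => ?_).mul
      (continuous_finsetProd _ fun i _ => hBc _)).add
      ((continuous_finsetProd _ fun i _ => hAc _).mul (continuous_finsetSum _ fun i _ => ?_))
    · exact (continuous_finsetProd _ fun i _ => hAc _).smul (by fun_prop)
    · exact (continuous_finsetProd _ fun i _ => hBc _).smul (by fun_prop)
  · intro θ U
    exact (HasDerivAt.fun_finsetProd fun i _ => hAd θ U (f i)).mul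
      (HasDerivAt.fun_finsetProd fun i _ => hBd θ U (g i))
  · intro θ
    have h0 : ∀ θ : ℝ, ∫ U, (∏ i, A θ U (f i)) * ∏ i, B θ U (g i) ∂μ =
        ∫ U, (∏ i, hsmPsi e U (f i)) * ∏ i, star (hsmPsi e U (g i)) ∂μ := by
      intro θ
      rw [← integral_mul_left_eq_self (μ := μ)
        (fun U => (∏ i, hsmPsi e U (f i)) * ∏ i, star (hsmPsi e U (g i)))
        (⟨_, hsm_unitary w r hr θ⟩ : Matrix.unitaryGroup (Fin d) ℂ)]
      simp only [hAV, hAB]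
    rw [h0, h0]

lemma hsmT_trace {d t : ℕ} (f : Fin t → Fin d) (g : Fin (t + 1) → Fin d) (x : Fin d → ℂ)
    (hx : ∑ i, x i * star (x i) = 1) (a : Fin d) :
    ∑ k, hsmT (Fin.cons k f : Fin (t + 1) → Fin d) g x k a =
      ((d : ℂ) + t) * ((x a * ∏ i, x (f i)) * ∏ j, star (x (g j))) -
      ∑ p, if g p = a then (∏ i, x (f i)) * ∏ j : Fin t, star (x (g (Equiv.swap 0 p (Fin.succ j))))
        else 0 := by
  unfold hsmT
  rw [Finset.sum_sub_distrib]
  congr 1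
  · rw [← Finset.sum_mul, ← mul_assoc]
    congr 1
    have h0 : ∀ k i, ∏ j ∈ Finset.univ.erase i, x ((Fin.cons k f : Fin (t + 1) → Fin d) j) =
        ∏ j : Fin t, x ((Fin.cons k f : Fin (t + 1) → Fin d) (Equiv.swap 0 i j.succ)) :=
      fun k i => hsm_prod_erase (fun j => x ((Fin.cons k f : Fin (t + 1) → Fin d) j)) i
    simp only [h0]
    simp only [Fin.sum_univ_succ, Fin.cons_zero, Fin.cons_succ]
    rw [Finset.sum_add_distrib, Finset.sum_comm]
    have h1 : ∀ i : Fin t, ∑ k, (if f i = k then (∏ j : Fin t, x ((Fin.cons k f :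
        Fin (t + 1) → Fin d) (Equiv.swap 0 i.succ j.succ))) * x a else 0)
        = x a * ∏ i, x (f i) := by
      intro i
      rw [Finset.sum_ite_eq]
      rw [if_pos (Finset.mem_univ _), mul_comm]
      congr 1
      refine Finset.prod_congr rfl fun j _ => ?_
      by_cases hj : j = i
      · subst hj; simp
      · rw [Equiv.swap_apply_of_ne_of_ne (Fin.succ_ne_zero _) (by simpa using hj)]
        simp
    simp only [h1]
    simp
    ring
  · have h0 : ∀ k, ∏ j, x ((Fin.cons k f : Fin (t + 1) → Fin d) j) = x k * ∏ i, x (f i) := by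
      intro k
      rw [Fin.prod_univ_succ]
      simp
    simp only [h0,
      hsm_prod_erase (fun j => star (x (g j)))]
    have h1 : ∀ k, (x k * ∏ i, x (f i)) * (∑ i, if g i = a then
        (∏ j : Fin t, star (x (g (Equiv.swap 0 i j.succ)))) * star (x k) else 0)
        = (x k * star (x k)) * ∑ p, if g p = a then (∏ i, x (f i)) *
          ∏ j : Fin t, star (x (g (Equiv.swap 0 p (Fin.succ j)))) else 0 := by
      intro k
      rw [Finset.mul_sum, Finset.mul_sum]
      refine Finset.sum_congr rfl fun i _ => ?_
      split_ifs
      · ring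
      · ring
    simp only [h1]
    rw [← Finset.sum_mul, hx, one_mul]

/-- Moments. -/
noncomputable def hsmJ {d : ℕ} (μ : Measure (Matrix.unitaryGroup (Fin d) ℂ)) (e : Fin d → ℂ)
    (t : ℕ) (f g : Fin t → Fin d) : ℂ :=
  ∫ U, (∏ i, hsmPsi e U (f i)) * ∏ i, star (hsmPsi e U (g i)) ∂μ

lemma hsm_cont {d t k : ℕ} (e : Fin d → ℂ) (f : Fin t → Fin d) (g : Fin k → Fin d) :
    Continuous (fun U => (∏ i, hsmPsi e U (f i)) * ∏ i, star (hsmPsi e U (g i))) :=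
  (continuous_finsetProd _ fun _ _ => hsmPsi_cont e _).mul
    (continuous_finsetProd _ fun _ _ => (hsmPsi_cont e _).star)

lemma hsm_step {d t : ℕ} (μ : Measure (Matrix.unitaryGroup (Fin d) ℂ)) [μ.IsHaarMeasure]
    [IsProbabilityMeasure μ] (e : Fin d → ℂ) (he : ∑ i, e i * star (e i) = 1)
    (f g : Fin (t + 1) → Fin d) :
    ((d : ℂ) + t) * hsmJ μ e (t + 1) f g = ∑ p, if g p = f 0 then
      hsmJ μ e t (f ∘ Fin.succ) (fun j => g (Equiv.swap 0 p (Fin.succ j))) else 0 := by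
  have := hsm_compact d
  have h : ∫ U, ∑ k, hsmT (Fin.cons k (f ∘ Fin.succ) : Fin (t + 1) → Fin d) g (hsmPsi e U) k (f 0)
      ∂μ = 0 := by
    rw [integral_finsetSum _ fun k _ => hsm_integrable μ (hsmT_cont _ _ _ _ _)]
    exact Finset.sum_eq_zero fun k _ => hsm_var _ _ _ _ _ _
  simp only [hsmT_trace _ g _ (hsmPsi_norm e he _)] at h
  have hi : ∀ p, Integrable (fun U => if g p = f 0 then (∏ i, hsmPsi e U ((f ∘ Fin.succ) i)) *
      ∏ j : Fin t, star (hsmPsi e U (g (Equiv.swap 0 p (Fin.succ j)))) else 0) μ := by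
    intro p
    split_ifs
    · exact hsm_integrable μ (hsm_cont e _ (fun j => g (Equiv.swap 0 p (Fin.succ j))))
    · exact integrable_zero _ _ _
  have hf : ∀ U, hsmPsi e U (f 0) * ∏ i, hsmPsi e U ((f ∘ Fin.succ) i) =
      ∏ i, hsmPsi e U (f i) := 
    fun U => (Fin.prod_univ_succ (fun i => hsmPsi e U (f i))).symm
  simp only [hf] at h
  rw [integral_sub ((hsm_integrable μ (hsm_cont e f g)).const_mul _)
    (integrable_finsetSum _ fun p _ => hi p), integral_const_mul,
    integral_finsetSum _ fun p _ => hi p] at h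
  unfold hsmJ
  rw [sub_eq_zero.1 h]
  refine Finset.sum_congr rfl fun p _ => ?_
  split_ifs
  · rfl
  · simp

lemma hsm_main {d : ℕ} (hd : 0 < d) (μ : Measure (Matrix.unitaryGroup (Fin d) ℂ)) [μ.IsHaarMeasure]
    [IsProbabilityMeasure μ] (e : Fin d → ℂ) (he : ∑ i, e i * star (e i) = 1)
    (t : ℕ) : ∀ (f g : Fin t → Fin d), hsmJ μ e t f g =
      (((d - 1).factorial : ℂ) / ((d + t - 1).factorial : ℂ)) *
        ∑ π : Equiv.Perm (Fin t), (if f = g ∘ π then (1 : ℂ) else 0) := by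
  induction t with
  | zero =>
    intro f g
    have h1 : ((d - 1).factorial : ℂ) ≠ 0 := by exact_mod_cast (Nat.factorial_pos _).ne'
    have h2 : ∀ π : Equiv.Perm (Fin 0), f = g ∘ π := fun π => Subsingleton.elim _ _
    rw [Finset.sum_congr rfl fun π _ => if_pos (h2 π)]
    simp [hsmJ, h1]
  | succ t ih =>
    intro f g
    have h := hsm_step μ e he f g
    have hne : (d : ℂ) + t ≠ 0 := by exact_mod_cast (by omega : d + t ≠ 0)
    have hfac : ((d + (t + 1) - 1).factorial : ℂ) = ((d : ℂ) + t) * ((d + t - 1).factorial : ℂ) := by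
      have : d + (t + 1) - 1 = (d + t - 1) + 1 := by omega
      rw [this, Nat.factorial_succ]
      have : d + t - 1 + 1 = d + t := by omega
      rw [this]; push_cast; ring
    have h1 : ((d + t - 1).factorial : ℂ) ≠ 0 := by exact_mod_cast (Nat.factorial_pos _).ne'
    apply mul_left_cancel₀ hne
    rw [h, hsm_count, hfac, ← mul_assoc, Finset.mul_sum]
    refine Finset.sum_congr rfl fun p _ => ?_
    split_ifs
    · rw [ih]
      congr 1
      field_simp
    · simp

/-- **Moments of a Haar random pure state.**
The `t`-th moment of a Haar random pure state equals the normalized projector onto the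
symmetric subspace, written as a sum of permutation operators:
`∫ ((Ue₀)(Ue₀)ᴴ)^{⊗t} dμ(U) = ((d−1)!/(d+t−1)!) · Σ_{π ∈ S_t} P_π`. -/
theorem haar_state_moment (d t : ℕ) (hd : 0 < d) (ht : 0 < t)
    (μ : Measure (Matrix.unitaryGroup (Fin d) ℂ))
    [μ.IsHaarMeasure] [IsProbabilityMeasure μ]
    (e₀ : Fin d → ℂ) (he₀ : e₀ = fun i => if i.val = 0 then (1 : ℂ) else 0) :
    (∫ U, tpow (Matrix.vecMulVec ((U : Matrix (Fin d) (Fin d) ℂ) *ᵥ e₀)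
        (star ((U : Matrix (Fin d) (Fin d) ℂ) *ᵥ e₀))) t ∂μ)
      = (((d - 1).factorial : ℂ) / ((d + t - 1).factorial : ℂ)) •
          ∑ π : Equiv.Perm (Fin t), permOp d t π := by
  have := hsm_compact d
  have he : ∑ i, e₀ i * star (e₀ i) = 1 := by
    rw [he₀, Finset.sum_eq_single (⟨0, hd⟩ : Fin d)]
    · simp
    · intro b _ hb
      have : b.val ≠ 0 := fun h => hb (Fin.ext h)
      simp [this]
    · simp
  have hent : ∀ f g : Fin t → Fin d, Integrable (fun U : Matrix.unitaryGroup (Fin d) ℂ =>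
      tpow (Matrix.vecMulVec ((U : Matrix (Fin d) (Fin d) ℂ) *ᵥ e₀)
        (star ((U : Matrix (Fin d) (Fin d) ℂ) *ᵥ e₀))) t f g) μ ∧
      ∫ U : Matrix.unitaryGroup (Fin d) ℂ,
      tpow (Matrix.vecMulVec ((U : Matrix (Fin d) (Fin d) ℂ) *ᵥ e₀)
        (star ((U : Matrix (Fin d) (Fin d) ℂ) *ᵥ e₀))) t f g ∂μ = hsmJ μ e₀ t f g := by
    intro f g
    have : (fun U : Matrix.unitaryGroup (Fin d) ℂ =>
      tpow (Matrix.vecMulVec ((U : Matrix (Fin d) (Fin d) ℂ) *ᵥ e₀)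
        (star ((U : Matrix (Fin d) (Fin d) ℂ) *ᵥ e₀))) t f g) =
        fun U => (∏ i, hsmPsi e₀ U (f i)) * ∏ i, star (hsmPsi e₀ U (g i)) := by
      funext U
      rw [← Finset.prod_mul_distrib]
      rfl
    rw [this]
    exact ⟨hsm_integrable μ (hsm_cont e₀ f g), rfl⟩
  ext f g
  have h1 := MeasureTheory.eval_integral (μ := μ)
    (f := fun (U : Matrix.unitaryGroup (Fin d) ℂ) (f : Fin t → Fin d) =>
      (tpow (Matrix.vecMulVec ((U : Matrix (Fin d) (Fin d) ℂ) *ᵥ e₀)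
        (star ((U : Matrix (Fin d) (Fin d) ℂ) *ᵥ e₀))) t f : (Fin t → Fin d) → ℂ))
    (fun f => Integrable.of_eval fun g => (hent f g).1) f
  have h2 := MeasureTheory.eval_integral (μ := μ)
    (f := fun (U : Matrix.unitaryGroup (Fin d) ℂ) (g : Fin t → Fin d) =>
      (tpow (Matrix.vecMulVec ((U : Matrix (Fin d) (Fin d) ℂ) *ᵥ e₀)
        (star ((U : Matrix (Fin d) (Fin d) ℂ) *ᵥ e₀))) t f g : ℂ))
    (fun g => (hent f g).1) g
  refine ((congrFun h1 g).trans h2).trans ?_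
  rw [(hent f g).2, hsm_main hd μ e₀ he t f g, Matrix.smul_apply, Matrix.sum_apply, smul_eq_mul]
  rfl
end

section
/- Let d, t be positive integers with t² ≤ d. Then d^t · (d−t)! / d! ≤ 1 + t²/d (as real numbers). Equivalently, ∏_{i=0}^{t−1} d/(d−i) ≤ 1 + t²/d. -/
lemma wg_prod_bound (d : ℕ) (hd : 0 < d) : ∀ t : ℕ, t ^ 2 ≤ d →
    (∏ i ∈ Finset.range t, (d : ℝ) / ((d : ℝ) - (i : ℝ))) ≤ 1 + (t : ℝ) ^ 2 / d := by
  intro t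
  induction t with
  | zero => intro _; simp
  | succ t ih =>
    intro h
    have h1 := ih ((Nat.pow_le_pow_left (Nat.le_succ t) 2).trans h)
    have hdt : t < d := by nlinarith
    have hd' : (0 : ℝ) < d := by exact_mod_cast hd
    have hdt' : (0 : ℝ) < (d : ℝ) - t := by
      have : (t : ℝ) < d := by exact_mod_cast hdt
      linarith
    have h' : ((t : ℝ) + 1) ^ 2 ≤ d := by exact_mod_cast h
    have ht0 : (0 : ℝ) ≤ t := Nat.cast_nonneg t
    rw [Finset.prod_range_succ]
    refine (mul_le_mul_of_nonneg_right h1 (by positivity)).trans ?_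
    have e1 : (1 + (t : ℝ) ^ 2 / d) * (d / (d - t)) = (d + (t : ℝ) ^ 2) / (d - t) := by
      field_simp
    have e2 : 1 + ((t + 1 : ℕ) : ℝ) ^ 2 / d = (d + ((t : ℝ) + 1) ^ 2) / d := by
      push_cast
      field_simp
    rw [e1, e2, div_le_div_iff₀ hdt' hd']
    have h2 : 0 ≤ ((t : ℝ) + 1) * (d - t * (t + 1)) :=
      mul_nonneg (by linarith) (by nlinarith)
    nlinarith

lemma wg_prod_eq (d : ℕ) : ∀ t : ℕ, t ≤ d →
    (d : ℝ) ^ t * ((d - t).factorial : ℝ) / (d.factorial : ℝ) =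
    ∏ i ∈ Finset.range t, (d : ℝ) / ((d : ℝ) - (i : ℝ)) := by
  intro t
  induction t with
  | zero =>
    intro _
    have : (d.factorial : ℝ) ≠ 0 := by exact_mod_cast d.factorial_ne_zero
    simp [this]
  | succ t ih =>
    intro h
    rw [Finset.prod_range_succ, ← ih (by omega)]
    have e : d - t = (d - (t + 1)) + 1 := by omega
    have hc : ((d - (t + 1) : ℕ) : ℝ) + 1 = (d : ℝ) - t := by
      rw [Nat.cast_sub h]
      push_cast
      ring
    have hne : (d : ℝ) - t ≠ 0 := by
      have : (t : ℝ) < d := by exact_mod_cast h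
      linarith
    have : (d.factorial : ℝ) ≠ 0 := by exact_mod_cast d.factorial_ne_zero
    rw [e, Nat.factorial_succ]
    push_cast
    rw [hc, pow_succ]
    field_simp


/-- **Weingarten sum bound.**
For positive integers `d, t` with `t² ≤ d`, one has `d^t·(d−t)!/d! ≤ 1 + t²/d`,
equivalently `∏_{i=0}^{t−1} d/(d−i) ≤ 1 + t²/d`. -/
theorem weingarten_sum_bound (d t : ℕ) (hd : 0 < d) (ht : 0 < t) (h : t ^ 2 ≤ d) :
    (d : ℝ) ^ t * ((d - t).factorial : ℝ) / (d.factorial : ℝ) ≤ 1 + (t : ℝ) ^ 2 / d ∧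
    (∏ i ∈ Finset.range t, (d : ℝ) / ((d : ℝ) - (i : ℝ))) ≤ 1 + (t : ℝ) ^ 2 / d := by


  have hb := wg_prod_bound d hd t h
  refine ⟨?_, hb⟩
  rw [wg_prod_eq d t (by nlinarith)]
  exact hb
end

section
/- Let N and t be positive integers and set s = t(t−1)/(2N) (a real number). Then 1 − s ≤ N^t·(N−1)!/(N+t−1)! ≤ 1 − s + s². Equivalently, 1 − s ≤ ∏_{i=1}^{t−1} (1 + i/N)^{−1} ≤ 1 − s + s². -/
theorem norm_const_aux (M t : ℕ) :
    0 < ((M : ℝ) + 1) ^ t * (M.factorial : ℝ) / ((M + t).factorial : ℝ) ∧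
    1 - (t : ℝ) * ((t : ℝ) - 1) / (2 * ((M : ℝ) + 1)) ≤
      ((M : ℝ) + 1) ^ t * (M.factorial : ℝ) / ((M + t).factorial : ℝ) ∧
    ((M : ℝ) + 1) ^ t * (M.factorial : ℝ) / ((M + t).factorial : ℝ) *
      (1 + (t : ℝ) * ((t : ℝ) - 1) / (2 * ((M : ℝ) + 1))) ≤ 1 ∧
    0 ≤ (t : ℝ) * ((t : ℝ) - 1) / (2 * ((M : ℝ) + 1)) := by
  induction t with
  | zero =>
    have : (M.factorial : ℝ) ≠ 0 := by positivity
    simp [this]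
  | succ t ih =>
    have hM : (0 : ℝ) < (M : ℝ) + 1 := by positivity
    have e1 : ((M : ℝ) + 1) ^ (t + 1) * (M.factorial : ℝ) / ((M + (t + 1)).factorial : ℝ)
        = ((M : ℝ) + 1) ^ t * (M.factorial : ℝ) / ((M + t).factorial : ℝ) /
          (1 + (t : ℝ) / ((M : ℝ) + 1)) := by
      have h1 : ((M + t).factorial : ℝ) ≠ 0 := by positivity
      have h2 : (M : ℝ) + 1 + t ≠ 0 := by positivity
      have h3 : (M : ℝ) + t + 1 ≠ 0 := by positivity
      rw [← add_assoc M t 1, Nat.factorial_succ]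
      push_cast
      field_simp
      ring
    have e2 : ((t + 1 : ℕ) : ℝ) * (((t + 1 : ℕ) : ℝ) - 1) / (2 * ((M : ℝ) + 1))
        = (t : ℝ) * ((t : ℝ) - 1) / (2 * ((M : ℝ) + 1)) + (t : ℝ) / ((M : ℝ) + 1) := by
      push_cast
      field_simp
      ring
    rw [e1, e2]
    have hx : 0 ≤ (t : ℝ) / ((M : ℝ) + 1) := by positivity
    generalize ((M : ℝ) + 1) ^ t * (M.factorial : ℝ) / ((M + t).factorial : ℝ) = P at *
    generalize (t : ℝ) * ((t : ℝ) - 1) / (2 * ((M : ℝ) + 1)) = s at *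
    generalize (t : ℝ) / ((M : ℝ) + 1) = x at *
    obtain ⟨hP, hl, hu, hs⟩ := ih
    have hP1 : P ≤ 1 := by nlinarith [mul_nonneg hP.le hs]
    have hx1 : 0 < 1 + x := by linarith
    refine ⟨by positivity, ?_, ?_, by positivity⟩
    · rw [le_div_iff₀ hx1]
      nlinarith [mul_nonneg hs hx, mul_nonneg hx hx]
    · rw [div_mul_eq_mul_div, div_le_iff₀ hx1]
      nlinarith [mul_nonneg hP.le (mul_nonneg hs hx), mul_le_mul_of_nonneg_right hu hx1.le]

/-- **Two-sided expansion of the symmetric-subspace normalization constant.**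
For positive integers `N, t` and `s = t(t−1)/(2N)`:
`1 − s ≤ N^t·(N−1)!/(N+t−1)! ≤ 1 − s + s²`. -/
theorem normalization_constant_bounds (N t : ℕ) (hN : 0 < N) (ht : 0 < t)
    (s : ℝ) (hs : s = (t : ℝ) * ((t : ℝ) - 1) / (2 * (N : ℝ))) :
    1 - s ≤ (N : ℝ) ^ t * ((N - 1).factorial : ℝ) / ((N + t - 1).factorial : ℝ) ∧
    (N : ℝ) ^ t * ((N - 1).factorial : ℝ) / ((N + t - 1).factorial : ℝ) ≤ 1 - s + s ^ 2 := by
  obtain ⟨M, rfl⟩ : ∃ M, N = M + 1 := ⟨N - 1, by omega⟩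
  have h := norm_const_aux M t
  have e : M + 1 + t - 1 = M + t := by omega
  rw [e, Nat.add_sub_cancel]
  push_cast at hs ⊢
  rw [← hs] at h
  generalize ((M : ℝ) + 1) ^ t * (M.factorial : ℝ) / ((M + t).factorial : ℝ) = P at *
  obtain ⟨hP, hl, hu, hs0⟩ := h
  refine ⟨hl, ?_⟩
  have h1 : 0 < 1 + s := by linarith
  have h3 : 0 ≤ s ^ 3 := by positivity
  refine le_of_mul_le_mul_right ?_ h1
  nlinarith
end

section
/- Let d ≥ 2 be an integer, let μ be the normalized Haar probability measure on U(d), and let Γ(X) = Σ_{i=1}^r K_i X K_iᴴ be a Kraus channel on d×d matrices (so Σ_i K_iᴴ K_i = I). Set q = (Σ_{i=1}^r |tr(K_i)|² − 1)/(d² − 1). Then for every density matrix ρ on ℂ^d, ∫_{U(d)} tr( ρ · Uᴴ Γ(U ρ Uᴴ) U ) dμ(U) = q·tr(ρ²) + (1 − q)/d. (Exact Haar-average of the unnormalized recovery fidelity F′ in the PQAS authentication theorem.) -/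
open MeasureTheory Matrix
open scoped ComplexOrder

attribute [local instance] Matrix.normedAddCommGroup Matrix.normedSpace

open scoped ComplexConjugate in
/-- Invariance of a fourth-order tensor under unitary conjugation. -/
def TensorInv {d : ℕ} (m : Fin d → Fin d → Fin d → Fin d → ℂ) : Prop :=
  ∀ V ∈ Matrix.unitaryGroup (Fin d) ℂ, ∀ j k l i,
    m j k l i = ∑ a, ∑ b, ∑ c, ∑ e, V j a * conj (V k b) * V l c * conj (V i e) * m a b c e

open scoped ComplexConjugate in
lemma TensorInv.diag {d : ℕ} {m : Fin d → Fin d → Fin d → Fin d → ℂ} (h : TensorInv m)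
    (z : Fin d → ℂ) (hz : ∀ i, z i * conj (z i) = 1) (j k l i : Fin d) :
    m j k l i = z j * conj (z k) * z l * conj (z i) * m j k l i := by
  have hV : Matrix.diagonal z ∈ Matrix.unitaryGroup (Fin d) ℂ := by
    rw [Matrix.mem_unitaryGroup_iff, Matrix.star_eq_conjTranspose, Matrix.diagonal_conjTranspose,
      Matrix.diagonal_mul_diagonal, ← Matrix.diagonal_one]
    congr 1
    funext i
    exact hz i
  have := h _ hV j k l i
  simpa [Matrix.diagonal_apply, apply_ite conj, ite_mul, mul_ite] using this

lemma TensorInv.perm {d : ℕ} {m : Fin d → Fin d → Fin d → Fin d → ℂ} (h : TensorInv m)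
    (σ : Equiv.Perm (Fin d)) (j k l i : Fin d) :
    m j k l i = m (σ j) (σ k) (σ l) (σ i) := by
  have hV : (Matrix.of fun i a => if σ i = a then (1 : ℂ) else 0)
      ∈ Matrix.unitaryGroup (Fin d) ℂ := by
    rw [Matrix.mem_unitaryGroup_iff]
    ext x y
    simp [Matrix.mul_apply, Matrix.star_apply, Matrix.one_apply, apply_ite, eq_comm]
  have := h _ hV j k l i
  simpa [apply_ite, ite_mul, mul_ite] using this

lemma TensorInv.zero {d : ℕ} {m : Fin d → Fin d → Fin d → Fin d → ℂ} (h : TensorInv m)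
    (j k l i : Fin d) (h1 : ¬ (j = k ∧ l = i)) (h2 : ¬ (j = i ∧ k = l)) : m j k l i = 0 := by
  have key : ∀ a : Fin d, _ := fun a => h.diag (fun x => if x = a then Complex.I else 1)
    (by intro x; by_cases hx : x = a <;> simp [hx]) j k l i
  have e1 : ∀ x : ℂ, x = -x → x = 0 := fun x hx => by linear_combination (1/2) * hx
  have e2 : ∀ x : ℂ, x = Complex.I * x → x = 0 := fun x hx => by
    linear_combination (1/2) * (1 + Complex.I) * hx + (1/2) * x * Complex.I_sq
  have e3 : ∀ x : ℂ, x = -(Complex.I * x) → x = 0 := fun x hx => by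
    linear_combination (1/2) * (1 - Complex.I) * hx + (1/2) * x * Complex.I_sq
  by_cases a1 : j = k
  · have a2 : l ≠ i := fun hh => h1 ⟨a1, hh⟩
    apply e2
    have := key l
    subst a1
    by_cases a3 : j = l
    · subst a3; simpa [a2.symm] using this
    · simpa [a2.symm, a3] using this
  · by_cases a2 : j = i
    · have a3 : k ≠ l := fun hh => h2 ⟨a2, hh⟩
      apply e3
      have := key k
      subst a2
      simpa [a1, a3.symm] using this
    · have := key j
      by_cases a3 : l = j
      · apply e1
        simpa [Ne.symm a1, Ne.symm a2, a3] using this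
      · apply e2
        simpa [Ne.symm a1, Ne.symm a2, a3] using this

/-- Reflection mixing two coordinates. -/
noncomputable def reflMat {d : ℕ} (a b : Fin d) : Matrix (Fin d) (Fin d) ℂ :=
  Matrix.of fun i j =>
    if i = a then (if j = a then 3/5 else if j = b then 4/5 else 0)
    else if i = b then (if j = a then 4/5 else if j = b then -(3/5) else 0)
    else if i = j then 1 else 0

lemma reflMat_row {d : ℕ} (a b : Fin d) (hab : a ≠ b) (f : Fin d → ℂ) :
    ∑ x, reflMat a b a x * f x = 3/5 * f a + 4/5 * f b := by
  have : ∀ x, reflMat a b a x * f x =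
      (if x = a then 3/5 * f x else 0) + (if x = b then 4/5 * f x else 0) := by
    intro x
    by_cases h1 : x = a
    · subst h1; simp [reflMat, hab]
    · simp [reflMat, h1]
  simp only [this, Finset.sum_add_distrib]
  simp

lemma reflMat_row2 {d : ℕ} (a b : Fin d) (hab : a ≠ b) (f : Fin d → ℂ) :
    ∑ x, reflMat a b b x * f x = 4/5 * f a - 3/5 * f b := by
  have : ∀ x, reflMat a b b x * f x =
      (if x = a then 4/5 * f x else 0) + (if x = b then -(3/5) * f x else 0) := by
    intro x
    by_cases h1 : x = a
    · subst h1; simp [reflMat, hab, hab.symm]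
    · simp [reflMat, h1, hab.symm]
  simp only [this, Finset.sum_add_distrib]
  simp
  ring

lemma reflMat_row3 {d : ℕ} (a b i : Fin d) (ha : i ≠ a) (hb : i ≠ b) (f : Fin d → ℂ) :
    ∑ x, reflMat a b i x * f x = f i := by
  simp [reflMat, ha, hb]

open scoped ComplexConjugate in
lemma reflMat_conj {d : ℕ} (a b i j : Fin d) : conj (reflMat a b i j) = reflMat a b i j := by
  simp only [reflMat, Matrix.of_apply]
  split_ifs <;> simp [map_ofNat]

lemma reflMat_mem {d : ℕ} (a b : Fin d) (hab : a ≠ b) :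
    reflMat a b ∈ Matrix.unitaryGroup (Fin d) ℂ := by
  rw [Matrix.mem_unitaryGroup_iff]
  ext i j
  rw [Matrix.mul_apply]
  simp only [Matrix.star_apply, RCLike.star_def, reflMat_conj]
  by_cases hi : i = a
  · subst hi
    rw [reflMat_row _ _ hab]
    by_cases h1 : j = i
    · subst h1; simp [reflMat, hab, hab.symm]; norm_num
    · by_cases h2 : j = b
      · subst h2; simp [reflMat, hab, hab.symm]; norm_num
      · simp [reflMat, h1, h2, Ne.symm h1]
  · by_cases hi' : i = b
    · subst hi'
      rw [reflMat_row2 _ _ hab]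
      by_cases h1 : j = a
      · subst h1; simp [reflMat, hab, hab.symm]; norm_num
      · by_cases h2 : j = i
        · subst h2; simp [reflMat, hab, hab.symm]; norm_num
        · simp [reflMat, h1, h2, Ne.symm h2]
    · rw [reflMat_row3 _ _ _ hi hi']
      by_cases h1 : j = a
      · subst h1; simp [reflMat, hi, hi']
      · by_cases h2 : j = b
        · subst h2; simp [reflMat, hi, hi', h1]
        · simp [reflMat, h1, h2, Matrix.one_apply, eq_comm (a := i)]

lemma TensorInv.refl {d : ℕ} {m : Fin d → Fin d → Fin d → Fin d → ℂ} (h : TensorInv m)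
    (a b : Fin d) (hab : a ≠ b) : m a a a a = m a a b b + m a b b a := by
  have key := h _ (reflMat_mem a b hab) a a a a
  simp only [reflMat_conj, mul_assoc, ← Finset.mul_sum, reflMat_row a b hab] at key
  have p1 := h.perm (Equiv.swap a b) a a a a
  have p2 := h.perm (Equiv.swap a b) a a b b
  have p3 := h.perm (Equiv.swap a b) a b b a
  simp only [Equiv.swap_apply_left, Equiv.swap_apply_right] at p1 p2 p3
  have z := h.zero
  rw [z a a a b (by grind) (by grind), z a a b a (by grind) (by grind),
    z a b a a (by grind) (by grind), z b a a a (by grind) (by grind),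
    z b b b a (by grind) (by grind), z b b a b (by grind) (by grind),
    z b a b b (by grind) (by grind), z a b b b (by grind) (by grind),
    z a b a b (by grind) (by grind), z b a b a (by grind) (by grind),
    ← p1, ← p2, ← p3] at key
  linear_combination (625/288) * key

lemma exists_perm_pair {d : ℕ} (a b a' b' : Fin d) (h : a ≠ b) (h' : a' ≠ b') :
    ∃ σ : Equiv.Perm (Fin d), σ a = a' ∧ σ b = b' := by
  obtain ⟨σ, hσ⟩ := Equiv.Perm.exists_extending_pair ![a, b] ![a', b']
    (by intro x y; fin_cases x <;> fin_cases y <;> simp [h, h.symm])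
    (by intro x y; fin_cases x <;> fin_cases y <;> simp [h', h'.symm])
  exact ⟨σ, by simpa using hσ 0, by simpa using hσ 1⟩

lemma TensorInv.form {d : ℕ} (hd : 2 ≤ d) {m : Fin d → Fin d → Fin d → Fin d → ℂ}
    (h : TensorInv m) : ∃ A B : ℂ, ∀ j k l i, m j k l i =
      A * (if j = k then (if l = i then 1 else 0) else 0) +
      B * (if j = i then (if k = l then 1 else 0) else 0) := by
  let x : Fin d := ⟨0, by omega⟩
  let y : Fin d := ⟨1, by omega⟩
  have hxy : x ≠ y := by simp [x, y]
  have hA : ∀ a b, a ≠ b → m a a b b = m x x y y := by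
    intro a b hab
    obtain ⟨σ, h1, h2⟩ := exists_perm_pair a b x y hab hxy
    rw [h.perm σ, h1, h2]
  have hB : ∀ a b, a ≠ b → m a b b a = m x y y x := by
    intro a b hab
    obtain ⟨σ, h1, h2⟩ := exists_perm_pair a b x y hab hxy
    rw [h.perm σ, h1, h2]
  have hC : ∀ a, m a a a a = m x x y y + m x y y x := by
    intro a
    by_cases hax : a = x
    · rw [hax]; exact h.refl x y hxy
    · rw [h.refl a x hax, hA _ _ hax, hB _ _ hax]
  refine ⟨m x x y y, m x y y x, fun j k l i => ?_⟩
  by_cases h1 : j = k ∧ l = i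
  · obtain ⟨rfl, rfl⟩ := h1
    by_cases h3 : j = l
    · subst h3; simp [hC]
    · simp [h3, hA j l h3]
  · by_cases h2 : j = i ∧ k = l
    · obtain ⟨rfl, rfl⟩ := h2
      have h3 : j ≠ k := by grind
      simp [h3, hB j k h3]
    · rw [h.zero j k l i h1 h2]
      grind

section

variable {d : ℕ}

/-- The conjugated state, entrywise. -/
noncomputable def cst (ρ : Matrix (Fin d) (Fin d) ℂ) (U : Matrix.unitaryGroup (Fin d) ℂ) :
    Matrix (Fin d) (Fin d) ℂ :=
  (U : Matrix (Fin d) (Fin d) ℂ) * ρ * (U : Matrix (Fin d) (Fin d) ℂ)ᴴ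

lemma cst_continuous (ρ : Matrix (Fin d) (Fin d) ℂ) (i j : Fin d) :
    Continuous fun U => cst ρ U i j := by
  have h : Continuous fun U : Matrix.unitaryGroup (Fin d) ℂ =>
      (U : Matrix (Fin d) (Fin d) ℂ) := continuous_subtype_val
  have : Continuous fun U => cst ρ U :=
    (h.matrix_mul continuous_const).matrix_mul h.matrix_conjTranspose
  exact this.matrix_elem i j

lemma cst_bound (ρ : Matrix (Fin d) (Fin d) ℂ) (i j : Fin d) (U) :
    ‖cst ρ U i j‖ ≤ ∑ y : Fin d, ∑ x : Fin d, ‖ρ x y‖ := by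
  have hb := fun a b => entry_norm_bound_of_unitary U.2 a b
  simp only [cst, Matrix.mul_apply, Matrix.conjTranspose_apply, Finset.sum_mul]
  refine (norm_sum_le _ _).trans (Finset.sum_le_sum fun y _ => ?_)
  refine (norm_sum_le _ _).trans (Finset.sum_le_sum fun x _ => ?_)
  rw [norm_mul, norm_mul, norm_star]
  have h1 := hb i x
  have h2 := hb j y
  have h3 := norm_nonneg (ρ x y)
  calc _ ≤ 1 * ‖ρ x y‖ * 1 := by gcongr
    _ = _ := by ring

lemma cst_integrable (μ : Measure (Matrix.unitaryGroup (Fin d) ℂ)) [IsProbabilityMeasure μ]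
    (ρ : Matrix (Fin d) (Fin d) ℂ) (j k l i : Fin d) :
    Integrable (fun U => cst ρ U j k * cst ρ U l i) μ := by
  have hc := (cst_continuous ρ j k).mul (cst_continuous ρ l i)
  refine Integrable.of_bound hc.measurable.aestronglyMeasurable
    ((∑ y : Fin d, ∑ x : Fin d, ‖ρ x y‖) * (∑ y : Fin d, ∑ x : Fin d, ‖ρ x y‖))
    (Filter.Eventually.of_forall fun U => ?_)
  rw [norm_mul]
  exact mul_le_mul (cst_bound ρ j k U) (cst_bound ρ l i U) (norm_nonneg _)
    ((norm_nonneg _).trans (cst_bound ρ j k U))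

/-- Second moments. -/
noncomputable def mom (μ : Measure (Matrix.unitaryGroup (Fin d) ℂ))
    (ρ : Matrix (Fin d) (Fin d) ℂ) (j k l i : Fin d) : ℂ :=
  ∫ U, cst ρ U j k * cst ρ U l i ∂μ

open scoped ComplexConjugate in
lemma cst_mul (ρ : Matrix (Fin d) (Fin d) ℂ) (V U : Matrix.unitaryGroup (Fin d) ℂ) (j k : Fin d) :
    cst ρ (V * U) j k = ∑ a, ∑ b, V.1 j a * conj (V.1 k b) * cst ρ U a b := by
  have : cst ρ (V * U) = V.1 * cst ρ U * V.1ᴴ := by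
    simp [cst, Matrix.mul_assoc, Matrix.conjTranspose_mul]
  rw [this, Finset.sum_comm]
  simp only [Matrix.mul_apply, Matrix.conjTranspose_apply, Finset.sum_mul]
  refine Finset.sum_congr rfl fun b _ => Finset.sum_congr rfl fun a _ => ?_
  simp only [RCLike.star_def]
  ring

lemma mom_lin (μ : Measure (Matrix.unitaryGroup (Fin d) ℂ)) [IsProbabilityMeasure μ]
    (ρ : Matrix (Fin d) (Fin d) ℂ) (W : Fin d → Fin d → Fin d → Fin d → ℂ) :
    ∫ U, ∑ a, ∑ b, ∑ c, ∑ e, W a b c e * (cst ρ U a b * cst ρ U c e) ∂μ =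
      ∑ a, ∑ b, ∑ c, ∑ e, W a b c e * mom μ ρ a b c e := by
  have h4 : ∀ a b c e, Integrable (fun U => W a b c e * (cst ρ U a b * cst ρ U c e)) μ :=
    fun a b c e => (cst_integrable μ ρ a b c e).const_mul _
  have h3 := fun a b c => integrable_finsetSum Finset.univ fun e _ => h4 a b c e
  have h2 := fun a b => integrable_finsetSum Finset.univ fun c _ => h3 a b c
  have h1 := fun a => integrable_finsetSum Finset.univ fun b _ => h2 a b
  rw [integral_finsetSum _ fun a _ => h1 a]
  refine Finset.sum_congr rfl fun a _ => ?_
  rw [integral_finsetSum _ fun b _ => h2 a b]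
  refine Finset.sum_congr rfl fun b _ => ?_
  rw [integral_finsetSum _ fun c _ => h3 a b c]
  refine Finset.sum_congr rfl fun c _ => ?_
  rw [integral_finsetSum _ fun e _ => h4 a b c e]
  refine Finset.sum_congr rfl fun e _ => ?_
  rw [integral_const_mul, mom]

lemma mom_inv (μ : Measure (Matrix.unitaryGroup (Fin d) ℂ)) [μ.IsHaarMeasure]
    [IsProbabilityMeasure μ] (ρ : Matrix (Fin d) (Fin d) ℂ) : TensorInv (mom μ ρ) := by
  intro V hV j k l i
  have h0 := integral_mul_left_eq_self (μ := μ) (fun U => cst ρ U j k * cst ρ U l i) ⟨V, hV⟩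
  rw [mom, ← h0, ← mom_lin]
  congr 1
  funext U
  rw [cst_mul, cst_mul]
  simp only [Finset.sum_mul]
  refine Finset.sum_congr rfl fun a _ => Finset.sum_congr rfl fun b _ => ?_
  simp only [Finset.mul_sum]
  refine Finset.sum_congr rfl fun c _ => Finset.sum_congr rfl fun e _ => ?_
  ring

lemma int_form (hd : 2 ≤ d) (μ : Measure (Matrix.unitaryGroup (Fin d) ℂ)) [μ.IsHaarMeasure]
    [IsProbabilityMeasure μ] (ρ : Matrix (Fin d) (Fin d) ℂ) :
    ∃ A B : ℂ, ∀ W : Fin d → Fin d → Fin d → Fin d → ℂ,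
      ∫ U, ∑ a, ∑ b, ∑ c, ∑ e, W a b c e * (cst ρ U a b * cst ρ U c e) ∂μ =
        A * ∑ a, ∑ c, W a a c c + B * ∑ a, ∑ b, W a b b a := by
  obtain ⟨A, B, h⟩ := (mom_inv μ ρ).form hd
  refine ⟨A, B, fun W => ?_⟩
  rw [mom_lin]
  simp only [h, mul_add, Finset.sum_add_distrib, Finset.mul_sum]
  congr 1
  · refine Finset.sum_congr rfl fun a _ => ?_
    rw [Finset.sum_eq_single a (by intro b _ hb; simp [hb.symm]) (by simp)]
    simp [mul_comm]
  · refine Finset.sum_congr rfl fun a _ => Finset.sum_congr rfl fun b _ => ?_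
    rw [Finset.sum_eq_single b (by intro c _ hb; simp [hb.symm]) (by simp)]
    simp [mul_comm]

lemma unitary_conj_mul (U : Matrix.unitaryGroup (Fin d) ℂ) : U.1ᴴ * U.1 = 1 :=
  Matrix.mem_unitaryGroup_iff'.1 U.2

lemma cst_trace (ρ : Matrix (Fin d) (Fin d) ℂ) (U) : (cst ρ U).trace = ρ.trace := by
  rw [cst, Matrix.trace_mul_comm, ← Matrix.mul_assoc, unitary_conj_mul, Matrix.one_mul]

lemma cst_sq (ρ : Matrix (Fin d) (Fin d) ℂ) (U) : cst ρ U * cst ρ U = cst (ρ * ρ) U := by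
  simp only [cst]
  calc _ = U.1 * ρ * (U.1ᴴ * U.1) * ρ * U.1ᴴ := by simp only [Matrix.mul_assoc]
    _ = _ := by rw [unitary_conj_mul]; simp only [Matrix.mul_assoc, Matrix.one_mul]

lemma int_const1 (μ : Measure (Matrix.unitaryGroup (Fin d) ℂ)) [IsProbabilityMeasure μ]
    (ρ : Matrix (Fin d) (Fin d) ℂ) (hρ : ρ.trace = 1) :
    ∫ U, ∑ a, ∑ b, ∑ c, ∑ e, (if a = b then (if c = e then (1 : ℂ) else 0) else 0) *
      (cst ρ U a b * cst ρ U c e) ∂μ = 1 := by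
  have : ∀ U, ∑ a, ∑ b, ∑ c, ∑ e, (if a = b then (if c = e then (1 : ℂ) else 0) else 0) *
      (cst ρ U a b * cst ρ U c e) = 1 := by
    intro U
    have h : (cst ρ U).trace * (cst ρ U).trace = 1 := by rw [cst_trace, hρ, mul_one]
    refine Eq.trans ?_ h
    simp only [Matrix.trace, Matrix.diag_apply, Finset.sum_mul_sum]
    refine Finset.sum_congr rfl fun a _ => ?_
    rw [Finset.sum_eq_single a (by intro b _ hb; simp [hb.symm]) (by simp)]
    simp
  simp only [this]
  simp

lemma int_const2 (μ : Measure (Matrix.unitaryGroup (Fin d) ℂ)) [IsProbabilityMeasure μ]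
    (ρ : Matrix (Fin d) (Fin d) ℂ) :
    ∫ U, ∑ a, ∑ b, ∑ c, ∑ e, (if a = e then (if b = c then (1 : ℂ) else 0) else 0) *
      (cst ρ U a b * cst ρ U c e) ∂μ = (ρ * ρ).trace := by
  have : ∀ U, ∑ a, ∑ b, ∑ c, ∑ e, (if a = e then (if b = c then (1 : ℂ) else 0) else 0) *
      (cst ρ U a b * cst ρ U c e) = (ρ * ρ).trace := by
    intro U
    have h : (cst ρ U * cst ρ U).trace = (ρ * ρ).trace := by rw [cst_sq, cst_trace]
    rw [← h]
    simp only [Matrix.trace, Matrix.diag_apply, Matrix.mul_apply]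
    refine Finset.sum_congr rfl fun a _ => Finset.sum_congr rfl fun b _ => ?_
    rw [Finset.sum_eq_single b (by intro c _ hb; simp [hb.symm]) (by simp)]
    simp
  simp only [this]
  simp

open scoped ComplexConjugate in
lemma integrand_eq {r : ℕ} (K : Fin r → Matrix (Fin d) (Fin d) ℂ)
    (ρ : Matrix (Fin d) (Fin d) ℂ) (U : Matrix.unitaryGroup (Fin d) ℂ) :
    (ρ * ((U : Matrix (Fin d) (Fin d) ℂ)ᴴ *
        (∑ i, K i * ((U : Matrix (Fin d) (Fin d) ℂ) * ρ *
          (U : Matrix (Fin d) (Fin d) ℂ)ᴴ) * (K i)ᴴ) *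
        (U : Matrix (Fin d) (Fin d) ℂ))).trace =
      ∑ a, ∑ b, ∑ c, ∑ e, (∑ i, K i e a * conj (K i c b)) * (cst ρ U a b * cst ρ U c e) := by
  have h1 : ∀ X : Matrix (Fin d) (Fin d) ℂ,
      (ρ * (U.1ᴴ * X * U.1)).trace = (X * cst ρ U).trace := by
    intro X
    rw [cst, Matrix.trace_mul_comm]
    calc _ = ((U.1ᴴ * X) * (U.1 * ρ)).trace := by simp only [Matrix.mul_assoc]
      _ = (U.1ᴴ * (X * (U.1 * ρ))).trace := by simp only [Matrix.mul_assoc]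
      _ = _ := by rw [Matrix.trace_mul_comm]; simp only [Matrix.mul_assoc]
  rw [h1, Finset.sum_mul, Matrix.trace_sum]
  change ∑ i, (K i * cst ρ U * (K i)ᴴ * cst ρ U).trace = _
  have h2 : ∀ i, (K i * cst ρ U * (K i)ᴴ * cst ρ U).trace =
      ∑ a, ∑ b, ∑ c, ∑ e, K i e a * conj (K i c b) * (cst ρ U a b * cst ρ U c e) := by
    intro i
    have : (K i * cst ρ U * (K i)ᴴ * cst ρ U).trace =
        (cst ρ U * ((K i)ᴴ * (cst ρ U * K i))).trace := by
      rw [Matrix.mul_assoc, Matrix.mul_assoc, Matrix.trace_mul_comm]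
      simp only [Matrix.mul_assoc]
    rw [this]
    simp only [Matrix.trace, Matrix.diag_apply, Matrix.mul_apply, Matrix.conjTranspose_apply,
      Finset.mul_sum]
    refine Finset.sum_congr rfl fun a _ => Finset.sum_congr rfl fun b _ =>
      Finset.sum_congr rfl fun c _ => Finset.sum_congr rfl fun e _ => ?_
    simp only [RCLike.star_def]
    ring
  simp only [h2, Finset.sum_mul]
  rw [Finset.sum_comm]
  refine Finset.sum_congr rfl fun a _ => ?_
  rw [Finset.sum_comm]
  refine Finset.sum_congr rfl fun b _ => ?_
  rw [Finset.sum_comm]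
  refine Finset.sum_congr rfl fun c _ => ?_
  rw [Finset.sum_comm]

end

/-- **Haar-average of the unnormalized recovery fidelity `F′` (PQAS authentication).**
For a Kraus channel `Γ` with `q = (Σᵢ |tr Kᵢ|² − 1)/(d² − 1)` and any density matrix `ρ`:
`∫ tr(ρ · Uᴴ Γ(U ρ Uᴴ) U) dμ(U) = q·tr(ρ²) + (1 − q)/d`. -/
theorem haar_average_fidelity (d : ℕ) (hd : 2 ≤ d)
    (μ : Measure (Matrix.unitaryGroup (Fin d) ℂ))
    [μ.IsHaarMeasure] [IsProbabilityMeasure μ]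
    (r : ℕ) (K : Fin r → Matrix (Fin d) (Fin d) ℂ)
    (hK : ∑ i, (K i)ᴴ * K i = 1)
    (q : ℝ) (hq : q = ((∑ i, ‖(K i).trace‖ ^ 2) - 1) / ((d : ℝ) ^ 2 - 1))
    (ρ : Matrix (Fin d) (Fin d) ℂ) (hρ : ρ.PosSemidef) (hρtr : ρ.trace = 1) :
    (∫ U, (ρ * ((U : Matrix (Fin d) (Fin d) ℂ)ᴴ *
        (∑ i, K i * ((U : Matrix (Fin d) (Fin d) ℂ) * ρ *
          (U : Matrix (Fin d) (Fin d) ℂ)ᴴ) * (K i)ᴴ) *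
        (U : Matrix (Fin d) (Fin d) ℂ))).trace ∂μ)
      = (q : ℂ) * (ρ * ρ).trace + (((1 - q) / (d : ℝ) : ℝ) : ℂ) := by
  obtain ⟨A, B, h⟩ := int_form hd μ ρ
  have c1 := h fun a b c e => if a = b then (if c = e then (1 : ℂ) else 0) else 0
  have c2 := h fun a b c e => if a = e then (if b = c then (1 : ℂ) else 0) else 0
  rw [int_const1 μ ρ hρtr] at c1
  rw [int_const2 μ ρ] at c2
  simp at c1 c2
  simp only [integrand_eq]
  rw [h fun a b c e => ∑ i, K i e a * (starRingEnd ℂ) (K i c b)]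
  have s1 : ∑ a, ∑ c, ∑ i, K i c a * (starRingEnd ℂ) (K i c a) = (d : ℂ) := by
    have := congrArg Matrix.trace hK
    simp only [Matrix.trace_sum, Matrix.trace_one, Fintype.card_fin] at this
    rw [← this]
    simp only [Matrix.trace, Matrix.diag_apply, Matrix.mul_apply, Matrix.conjTranspose_apply]
    rw [Finset.sum_comm]
    conv_lhs => enter [2, c]; rw [Finset.sum_comm]
    rw [Finset.sum_comm]
    refine Finset.sum_congr rfl fun i _ => ?_
    rw [Finset.sum_comm]
    refine Finset.sum_congr rfl fun a _ => Finset.sum_congr rfl fun c _ => ?_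
    simp only [RCLike.star_def]
    ring
  have s2 : ∑ a, ∑ b, ∑ i, K i a a * (starRingEnd ℂ) (K i b b) =
      ((∑ i, ‖(K i).trace‖ ^ 2 : ℝ) : ℂ) := by
    push_cast
    simp only [← Complex.mul_conj', Matrix.trace, Matrix.diag_apply, map_sum, Finset.sum_mul_sum]
    conv_lhs => enter [2, c]; rw [Finset.sum_comm]
    rw [Finset.sum_comm]
  rw [s1, s2]
  have hdR : (2 : ℝ) ≤ d := by exact_mod_cast hd
  have hd1 : (d : ℝ) ^ 2 - 1 ≠ 0 := by nlinarith
  have hS : (∑ i, ‖(K i).trace‖ ^ 2) = q * ((d : ℝ) ^ 2 - 1) + 1 := by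
    rw [hq]; field_simp; ring
  rw [hS]
  have hd0 : (d : ℂ) ≠ 0 := by
    have : d ≠ 0 := by omega
    exact_mod_cast this
  push_cast
  rw [c2]
  field_simp
  linear_combination (q - 1) * c1
end

section
/- Let d ≥ 1 be an integer, Γ(X) = Σ_{i=1}^r K_i X K_iᴴ a Kraus channel on d×d matrices (so Σ_i K_iᴴ K_i = I), ρ a density matrix on ℂ^d, and A a d×d complex matrix with operator norm ‖A‖ ≤ 1. Define F′(U) = tr( A · Uᴴ Γ(U ρ Uᴴ) U ). Then for all unitary matrices U, V ∈ U(d): |F′(U) − F′(V)| ≤ 4·‖U − V‖_F, where ‖·‖_F is the Frobenius (Hilbert–Schmidt) norm. (F′ is a Lipschitz function of the scrambling unitary with Lipschitz constant at most 4.) -/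
open Matrix
open scoped ComplexOrder

/-- The Frobenius (Hilbert–Schmidt) norm of a complex matrix: `√(Σᵢⱼ |Mᵢⱼ|²)`. -/
noncomputable def frobNorm {m n : Type*} [Fintype m] [Fintype n] (M : Matrix m n ℂ) : ℝ :=
  Real.sqrt (∑ i, ∑ j, ‖M i j‖ ^ 2)

open scoped Matrix.Norms.L2Operator in
theorem fl_frob_eq {d : ℕ} (M : Matrix (Fin d) (Fin d) ℂ) :
    ((∑ i, ∑ j, ‖M i j‖ ^ 2 : ℝ) : ℂ) = (Mᴴ * M).trace := by
  rw [Finset.sum_comm]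
  simp only [Matrix.trace, Matrix.diag, Matrix.mul_apply, Matrix.conjTranspose_apply]
  push_cast
  refine Finset.sum_congr rfl fun i _ => Finset.sum_congr rfl fun j _ => ?_
  exact (Complex.conj_mul' _).symm

open scoped Matrix.Norms.L2Operator in
theorem fl_frob_mul {d : ℕ} (M N : Matrix (Fin d) (Fin d) ℂ) :
    ∑ i, ∑ j, ‖(M * N) i j‖ ^ 2 ≤ ‖M‖ ^ 2 * ∑ i, ∑ j, ‖N i j‖ ^ 2 := by
  rw [Finset.sum_comm, Finset.sum_comm (f := fun i j => ‖N i j‖ ^ 2), Finset.mul_sum]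
  refine Finset.sum_le_sum fun j _ => ?_
  have h := Matrix.l2_opNorm_mulVec M (WithLp.toLp 2 (fun i => N i j))
  have h2 := pow_le_pow_left₀ (norm_nonneg _) h 2
  rw [mul_pow, EuclideanSpace.norm_sq_eq, EuclideanSpace.norm_sq_eq] at h2
  simpa [Matrix.mul_apply, Matrix.mulVec, dotProduct] using h2

open scoped Matrix.Norms.L2Operator in
theorem fl_op_le_frob {d : ℕ} (M : Matrix (Fin d) (Fin d) ℂ) : ‖M‖ ≤ frobNorm M := by
  rw [Matrix.l2_opNorm_def]
  refine ContinuousLinearMap.opNorm_le_bound _ (Real.sqrt_nonneg _) fun v => ?_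
  rw [EuclideanSpace.norm_eq, EuclideanSpace.norm_eq v, frobNorm,
    ← Real.sqrt_mul (by positivity)]
  apply Real.sqrt_le_sqrt
  rw [Finset.sum_mul]
  refine Finset.sum_le_sum fun i _ => ?_
  have h1 : ‖∑ j, M i j * v j‖ ≤ ∑ j, ‖M i j‖ * ‖v j‖ :=
    (norm_sum_le _ _).trans (by simp)
  have h2 := Finset.sum_mul_sq_le_sq_mul_sq Finset.univ (fun j => ‖M i j‖) (fun j => ‖v j‖)
  have h3 := pow_le_pow_left₀ (norm_nonneg _) h1 2
  simpa [Matrix.toLpLin_apply, Matrix.mulVec, dotProduct] using h3.trans h2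

theorem fl_cs {d r : ℕ} (P Q : Fin r → Matrix (Fin d) (Fin d) ℂ) :
    ‖∑ i, (Q i * (P i)ᴴ).trace‖ ≤ Real.sqrt (∑ i, ∑ a, ∑ b, ‖Q i a b‖ ^ 2) *
      Real.sqrt (∑ i, ∑ a, ∑ b, ‖P i a b‖ ^ 2) := by
  have h := Real.sum_mul_le_sqrt_mul_sqrt (Finset.univ : Finset (Fin r × Fin d × Fin d))
    (fun x => ‖Q x.1 x.2.1 x.2.2‖) (fun x => ‖P x.1 x.2.1 x.2.2‖)
  simp only [Fintype.sum_prod_type] at h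
  refine le_trans ?_ h
  simp only [Matrix.trace, Matrix.diag, Matrix.mul_apply, Matrix.conjTranspose_apply]
  refine (norm_sum_le _ _).trans (Finset.sum_le_sum fun i _ => ?_)
  refine (norm_sum_le _ _).trans (Finset.sum_le_sum fun a _ => ?_)
  refine (norm_sum_le _ _).trans (Finset.sum_le_sum fun b _ => ?_)
  simp

open scoped Matrix.Norms.L2Operator in
theorem fl_kraus {d r : ℕ} (K : Fin r → Matrix (Fin d) (Fin d) ℂ)
    (hK : ∑ i, (K i)ᴴ * K i = 1) (C : Matrix (Fin d) (Fin d) ℂ)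
    (hC : ∑ a, ∑ b, ‖C a b‖ ^ 2 = 1) (W X : Matrix (Fin d) (Fin d) ℂ) :
    Real.sqrt (∑ i, ∑ a, ∑ b, ‖(W * (K i * (X * C))) a b‖ ^ 2) ≤ ‖W‖ * ‖X‖ := by
  have hk : ∑ i, ∑ a, ∑ b, ‖(K i * (X * C)) a b‖ ^ 2 = ∑ a, ∑ b, ‖(X * C) a b‖ ^ 2 := by
    apply Complex.ofReal_injective
    rw [fl_frob_eq, Complex.ofReal_sum]
    simp only [fl_frob_eq]
    rw [← Matrix.trace_sum]
    congr 1
    have : ∀ i, (K i * (X * C))ᴴ * (K i * (X * C)) = (X * C)ᴴ * ((K i)ᴴ * K i) * (X * C) := by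
      intro i
      rw [Matrix.conjTranspose_mul (K i)]
      simp only [Matrix.mul_assoc]
    simp only [this]
    rw [← Finset.sum_mul, ← Finset.mul_sum, hK, Matrix.mul_one]
  rw [Real.sqrt_le_left (by positivity)]
  calc _ ≤ ∑ i, ‖W‖ ^ 2 * ∑ a, ∑ b, ‖(K i * (X * C)) a b‖ ^ 2 :=
        Finset.sum_le_sum fun i _ => fl_frob_mul _ _
    _ = ‖W‖ ^ 2 * ∑ a, ∑ b, ‖(X * C) a b‖ ^ 2 := by rw [← Finset.mul_sum, hk]
    _ ≤ ‖W‖ ^ 2 * (‖X‖ ^ 2 * ∑ a, ∑ b, ‖C a b‖ ^ 2) := by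
        gcongr; exact fl_frob_mul _ _
    _ = _ := by rw [hC]; ring

open scoped Matrix.Norms.L2Operator in
theorem fl_form {d r : ℕ} (K : Fin r → Matrix (Fin d) (Fin d) ℂ)
    (hK : ∑ i, (K i)ᴴ * K i = 1) (C : Matrix (Fin d) (Fin d) ℂ)
    (hC : ∑ a, ∑ b, ‖C a b‖ ^ 2 = 1) (A : Matrix (Fin d) (Fin d) ℂ) (hA : ‖A‖ ≤ 1)
    (W X Y Z : Matrix (Fin d) (Fin d) ℂ) :
    ‖(A * (Wᴴ * (∑ i, K i * (X * (C * Cᴴ) * Yᴴ) * (K i)ᴴ) * Z)).trace‖ ≤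
      ‖W‖ * ‖X‖ * (‖Y‖ * ‖Z‖) := by
  have e : (A * (Wᴴ * (∑ i, K i * (X * (C * Cᴴ) * Yᴴ) * (K i)ᴴ) * Z)).trace =
      ∑ i, (((A * Wᴴ) * (K i * (X * C))) * (Zᴴ * (K i * (Y * C)))ᴴ).trace := by
    rw [← Matrix.trace_sum]
    congr 1
    rw [Finset.mul_sum, Finset.sum_mul, Finset.mul_sum]
    refine Finset.sum_congr rfl fun i _ => ?_
    simp only [Matrix.conjTranspose_mul, Matrix.conjTranspose_conjTranspose, Matrix.mul_assoc]
  rw [e]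
  refine (fl_cs _ _).trans ?_
  have h1 := fl_kraus K hK C hC (A * Wᴴ) X
  have h2 := fl_kraus K hK C hC Zᴴ Y
  rw [Matrix.l2_opNorm_conjTranspose] at h2
  have h3 : ‖A * Wᴴ‖ ≤ ‖W‖ := by
    refine (Matrix.l2_opNorm_mul _ _).trans ?_
    rw [Matrix.l2_opNorm_conjTranspose]
    exact mul_le_of_le_one_left (norm_nonneg _) hA
  have h4 := h1.trans (mul_le_mul_of_nonneg_right h3 (norm_nonneg X))
  rw [mul_comm ‖Z‖] at h2
  exact mul_le_mul h4 h2 (Real.sqrt_nonneg _) (by positivity)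

open scoped MatrixOrder Matrix.Norms.L2Operator in
theorem fl_sqrt {d : ℕ} {ρ : Matrix (Fin d) (Fin d) ℂ} (h : ρ.PosSemidef) :
    ∃ B : Matrix (Fin d) (Fin d) ℂ, ρ = Bᴴ * B :=
  CStarAlgebra.nonneg_iff_eq_star_mul_self.mp h.nonneg

open scoped Matrix.Norms.L2Operator in
theorem fl_main {d r : ℕ} (K : Fin r → Matrix (Fin d) (Fin d) ℂ)
    (hK : ∑ i, (K i)ᴴ * K i = 1)
    (ρ : Matrix (Fin d) (Fin d) ℂ) (hρ : ρ.PosSemidef) (hρtr : ρ.trace = 1)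
    (A : Matrix (Fin d) (Fin d) ℂ)
    (hA : ∀ v : EuclideanSpace ℂ (Fin d), ‖Matrix.toEuclideanLin A v‖ ≤ ‖v‖)
    (F' : Matrix.unitaryGroup (Fin d) ℂ → ℂ)
    (hF' : F' = fun (U : Matrix.unitaryGroup (Fin d) ℂ) => (A * ((U : Matrix (Fin d) (Fin d) ℂ)ᴴ *
        (∑ i, K i * ((U : Matrix (Fin d) (Fin d) ℂ) * ρ *
          (U : Matrix (Fin d) (Fin d) ℂ)ᴴ) * (K i)ᴴ) *
        (U : Matrix (Fin d) (Fin d) ℂ))).trace) (U V : Matrix.unitaryGroup (Fin d) ℂ) :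
      ‖F' U - F' V‖ ≤
        4 * frobNorm ((U : Matrix (Fin d) (Fin d) ℂ) - (V : Matrix (Fin d) (Fin d) ℂ)) := by
  have hA1 : ‖A‖ ≤ 1 := by
    rw [Matrix.l2_opNorm_def]
    refine ContinuousLinearMap.opNorm_le_bound _ zero_le_one fun v => ?_
    rw [one_mul]
    exact hA v
  obtain ⟨B, hB⟩ := fl_sqrt hρ
  obtain ⟨C, hC⟩ : ∃ C, C = Bᴴ := ⟨_, rfl⟩
  have hρC : ρ = C * Cᴴ := by rw [hC, Matrix.conjTranspose_conjTranspose, hB]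
  have hC1 : ∑ a, ∑ b, ‖C a b‖ ^ 2 = 1 := by
    apply Complex.ofReal_injective
    rw [fl_frob_eq, Matrix.trace_mul_comm, ← hρC, hρtr, Complex.ofReal_one]
  have hn : ∀ W : Matrix.unitaryGroup (Fin d) ℂ, ‖(W : Matrix (Fin d) (Fin d) ℂ)‖ ≤ 1 := by
    intro W
    rw [Matrix.l2_opNorm_def]
    refine ContinuousLinearMap.opNorm_le_bound _ zero_le_one fun v => ?_
    have h1 : ‖(W : Matrix (Fin d) (Fin d) ℂ)‖ * ‖(W : Matrix (Fin d) (Fin d) ℂ)‖ ≤ 1 := by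
      rw [← Matrix.l2_opNorm_conjTranspose_mul_self]
      have : (W : Matrix (Fin d) (Fin d) ℂ)ᴴ * (W : Matrix (Fin d) (Fin d) ℂ) = 1 :=
        Matrix.UnitaryGroup.star_mul_self W
      rw [this, Matrix.l2_opNorm_def]
      refine ContinuousLinearMap.opNorm_le_bound _ zero_le_one fun v => ?_
      simp
    have h2 : ‖(W : Matrix (Fin d) (Fin d) ℂ)‖ ≤ 1 := by nlinarith [norm_nonneg (W : Matrix (Fin d) (Fin d) ℂ)]
    exact (Matrix.l2_opNorm_mulVec _ v).trans (mul_le_mul_of_nonneg_right h2 (norm_nonneg _))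
  have hu := hn U
  have hv := hn V
  have hD := fl_op_le_frob ((U : Matrix (Fin d) (Fin d) ℂ) - (V : Matrix (Fin d) (Fin d) ℂ))
  subst hF'
  dsimp only
  rw [hρC]
  generalize (U : Matrix (Fin d) (Fin d) ℂ) = u at *
  generalize (V : Matrix (Fin d) (Fin d) ℂ) = v at *
  have key := fl_form K hK C hC1 A hA1
  have e : (A * (uᴴ * (∑ i, K i * (u * (C * Cᴴ) * uᴴ) * (K i)ᴴ) * u)).trace -
      (A * (vᴴ * (∑ i, K i * (v * (C * Cᴴ) * vᴴ) * (K i)ᴴ) * v)).trace =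
      (A * ((u - v)ᴴ * (∑ i, K i * (u * (C * Cᴴ) * uᴴ) * (K i)ᴴ) * u)).trace +
      (A * (vᴴ * (∑ i, K i * ((u - v) * (C * Cᴴ) * uᴴ) * (K i)ᴴ) * u)).trace +
      (A * (vᴴ * (∑ i, K i * (v * (C * Cᴴ) * (u - v)ᴴ) * (K i)ᴴ) * u)).trace +
      (A * (vᴴ * (∑ i, K i * (v * (C * Cᴴ) * vᴴ) * (K i)ᴴ) * (u - v))).trace := by
    simp only [Matrix.conjTranspose_sub, Matrix.sub_mul, Matrix.mul_sub, Finset.sum_sub_distrib,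
      Matrix.trace_sub]
    ring
  rw [e]
  have b : ∀ x y z w : ℝ, 0 ≤ x → 0 ≤ y → 0 ≤ z → 0 ≤ w → y ≤ 1 → z ≤ 1 → w ≤ 1 →
      x * y * (z * w) ≤ x := by
    intro x y z w hx hy hz hw h1 h2 h3
    have : y * (z * w) ≤ 1 := mul_le_one₀ h1 (by positivity) (mul_le_one₀ h2 hw h3)
    nlinarith
  have n0 := norm_nonneg u
  have n1 := norm_nonneg v
  have n2 := norm_nonneg (u - v)
  have k1 := (key (u - v) u u u).trans (b _ _ _ _ n2 n0 n0 n0 hu hu hu)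
  have k2 := (key v (u - v) u u).trans
    ((by ring : _ = ‖u - v‖ * ‖v‖ * (‖u‖ * ‖u‖)).le.trans (b _ _ _ _ n2 n1 n0 n0 hv hu hu))
  have k3 := (key v v (u - v) u).trans
    ((by ring : _ = ‖u - v‖ * ‖v‖ * (‖v‖ * ‖u‖)).le.trans (b _ _ _ _ n2 n1 n1 n0 hv hv hu))
  have k4 := (key v v v (u - v)).trans
    ((by ring : _ = ‖u - v‖ * ‖v‖ * (‖v‖ * ‖v‖)).le.trans (b _ _ _ _ n2 n1 n1 n1 hv hv hv))
  refine (norm_add_le _ _).trans ?_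
  refine (add_le_add_left (norm_add_le _ _) _).trans ?_
  refine (add_le_add_left (add_le_add_left (norm_add_le _ _) _) _).trans ?_
  linarith

/-- **Lipschitz continuity of the unnormalized fidelity `F′` in the scrambling unitary.**
For a Kraus channel `Γ`, a density matrix `ρ`, and `A` with operator norm `‖A‖ ≤ 1`,
the map `F′(U) = tr(A · Uᴴ Γ(U ρ Uᴴ) U)` satisfies
`|F′(U) − F′(V)| ≤ 4‖U − V‖_F` for all unitaries `U, V`. -/
theorem fidelity_lipschitz (d : ℕ) (hd : 1 ≤ d)
    (r : ℕ) (K : Fin r → Matrix (Fin d) (Fin d) ℂ)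
    (hK : ∑ i, (K i)ᴴ * K i = 1)
    (ρ : Matrix (Fin d) (Fin d) ℂ) (hρ : ρ.PosSemidef) (hρtr : ρ.trace = 1)
    (A : Matrix (Fin d) (Fin d) ℂ)
    (hA : ∀ v : EuclideanSpace ℂ (Fin d), ‖Matrix.toEuclideanLin A v‖ ≤ ‖v‖)
    (F' : Matrix.unitaryGroup (Fin d) ℂ → ℂ)
    (hF' : F' = fun (U : Matrix.unitaryGroup (Fin d) ℂ) => (A * ((U : Matrix (Fin d) (Fin d) ℂ)ᴴ *
        (∑ i, K i * ((U : Matrix (Fin d) (Fin d) ℂ) * ρ *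
          (U : Matrix (Fin d) (Fin d) ℂ)ᴴ) * (K i)ᴴ) *
        (U : Matrix (Fin d) (Fin d) ℂ))).trace) :
    ∀ U V : Matrix.unitaryGroup (Fin d) ℂ,
      ‖F' U - F' V‖ ≤
        4 * frobNorm ((U : Matrix (Fin d) (Fin d) ℂ) - (V : Matrix (Fin d) (Fin d) ℂ)) := by
  intro U V
  exact fl_main K hK ρ hρ hρtr A hA F' hF' U V
end
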